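/- arXiv:1212.5694 — 2 statements merged into one kernel-verified Lean document; each statement's English description precedes it below -/
import Mathlib

section
/- Let R be a commutative ring, A = (a_{ij}) ∈ R^{m×n}, b = (b_i) ∈ R^m, and let X = X_1 × ⋯ × X_n be a d-grid with N(x) a unit in R for every x ∈ X (e.g. any grid over a field). If m ≤ d_1 + ⋯ + d_n, then per_d(A) = Σ_{x ∈ X} N(x)^{−1} · ∏_{i=1}^m ( (Σ_{j=1}^n a_{ij} x_j) − b_i ), where d = (d_1,…,d_n). -/
open MvPolynomial Finset

theorem aux_inverse_prod {R ι : Type*} [CommRing R] (s : Finset ι) (f : ι → R) :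
    Ring.inverse (∏ j ∈ s, f j) = ∏ j ∈ s, Ring.inverse (f j) := by
  classical
  induction s using Finset.induction_on with
  | empty => simp
  | insert a s ha ih =>
    rw [Finset.prod_insert ha, Finset.prod_insert ha, Ring.mul_inverse_rev, ih, mul_comm]

theorem aux_one {R : Type*} [CommRing R] [DecidableEq R] (S : Finset R)
    (hu : ∀ x ∈ S, ∀ z ∈ S, x ≠ z → IsUnit (x - z)) (k d : ℕ) (hS : S.card = d + 1)
    (hk : k ≤ d) :
    ∑ x ∈ S, Ring.inverse (∏ z ∈ S.erase x, (x - z)) * x ^ k = if k = d then 1 else 0 := by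
  nontriviality R
  set w : R → R := fun x => Ring.inverse (∏ z ∈ S.erase x, (x - z)) with hw
  have hwu : ∀ x ∈ S, w x * ∏ z ∈ S.erase x, (x - z) = 1 := by
    intro x hx
    apply Ring.inverse_mul_cancel
    rw [IsUnit.prod_iff]
    intro z hz
    rw [Finset.mem_erase] at hz
    exact hu x hx z hz.2 hz.1.symm
  let B : R → Polynomial R := fun x => ∏ z ∈ S.erase x, (Polynomial.X - Polynomial.C z)
  have hBm : ∀ x, (B x).Monic := fun x => Polynomial.monic_prod_X_sub_C (fun z => z) _
  have hBd : ∀ x ∈ S, (B x).natDegree = d := by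
    intro x hx
    have := Polynomial.natDegree_finset_prod_X_sub_C_eq_card (S.erase x) (fun z => z)
    rw [Finset.card_erase_of_mem hx, hS] at this
    simpa [B] using this
  let P : Polynomial R := Polynomial.X ^ k - ∑ x ∈ S, Polynomial.C (w x * x ^ k) * B x
  have hP0 : P = 0 := by
    have hdvd : (∏ z ∈ S, (Polynomial.X - Polynomial.C z)) ∣ P := by
      apply Finset.prod_dvd_of_coprime
      · intro a ha b hb hab
        exact Polynomial.isCoprime_X_sub_C_of_isUnit_sub (hu a ha b hb hab)
      · intro y hy
        rw [Polynomial.dvd_iff_isRoot]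
        simp only [P, B, Polynomial.IsRoot, Polynomial.eval_sub, Polynomial.eval_pow,
          Polynomial.eval_X, Polynomial.eval_finset_sum, Polynomial.eval_mul,
          Polynomial.eval_C, Polynomial.eval_prod]
        rw [Finset.sum_eq_single y]
        · linear_combination (-y ^ k) * hwu y hy
        · intro x _ hxy
          rw [Finset.prod_eq_zero (i := y)]
          · simp
          · simp [hy, hxy.symm]
          · simp
        · intro h; exact absurd hy h
    have hmon : (∏ z ∈ S, (Polynomial.X - Polynomial.C z)).Monic :=
      Polynomial.monic_prod_X_sub_C (fun z => z) _
    have hdeg : (∏ z ∈ S, (Polynomial.X - Polynomial.C z)).natDegree = d + 1 := by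
      rw [← hS]
      exact Polynomial.natDegree_finset_prod_X_sub_C_eq_card S (fun z => z)
    by_contra hne
    refine hmon.not_dvd_of_natDegree_lt hne ?_ hdvd
    rw [hdeg, Nat.lt_succ_iff]
    refine (Polynomial.natDegree_sub_le _ _).trans (max_le ?_ ?_)
    · simpa using hk
    · apply Polynomial.natDegree_sum_le_of_forall_le
      intro x hx
      exact (Polynomial.natDegree_C_mul_le _ _).trans (hBd x hx).le
  have hc : P.coeff d = 0 := by rw [hP0]; simp
  simp only [P, Polynomial.coeff_sub, Polynomial.coeff_X_pow, Polynomial.finset_sum_coeff,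
    Polynomial.coeff_C_mul] at hc
  rw [Finset.sum_congr rfl (g := fun x => w x * x ^ k)] at hc
  · rw [← sub_eq_zero.mp hc]
    simp [eq_comm]
  · intro x hx
    have : (B x).coeff d = 1 := by
      have := (hBm x).coeff_natDegree
      rwa [hBd x hx] at this
    rw [this, mul_one]

/-- Permanent formula: over a division grid with `m ≤ Σ d_j`,
`per_d(A) = ∑_{x ∈ X} N(x)⁻¹ ∏_i ((Ax)_i − b_i)`. -/
theorem permanent_formula {R : Type*} [CommRing R] [DecidableEq R] {m n : ℕ}
    (A : Fin m → Fin n → R) (b : Fin m → R)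
    (X : Fin n → Finset R) (hX : ∀ j, (X j).Nonempty)
    (d : Fin n → ℕ) (hd : ∀ j, d j = (X j).card - 1)
    (hN : ∀ x : Fin n → R, (∀ j, x j ∈ X j) →
      IsUnit (∏ j, ∏ z ∈ (X j).erase (x j), (x j - z)))
    (hm : m ≤ ∑ j, d j) :
    ∑ σ ∈ (Finset.univ : Finset (Fin m → Fin n)).filter
        (fun σ => ∀ j, (Finset.univ.filter (fun i => σ i = j)).card = d j),
        ∏ i, A i (σ i)
      = ∑ x ∈ Fintype.piFinset X,
          Ring.inverse (∏ j, ∏ z ∈ (X j).erase (x j), (x j - z))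
          * ∏ i, ((∑ j, A i j * x j) - b i) := by
  have hu : ∀ j, ∀ x ∈ X j, ∀ z ∈ X j, x ≠ z → IsUnit (x - z) := by
    intro j x hx z hz hxz
    choose y hy using hX
    have h := hN (Function.update y j x) (by
      intro i
      by_cases hi : i = j
      · subst hi; simpa using hx
      · simpa [hi] using hy i)
    rw [IsUnit.prod_univ_iff] at h
    have h2 := h j
    rw [IsUnit.prod_iff] at h2
    have h3 := h2 z (by simp [hz, hxz.symm])
    simpa using h3
  have h1 : ∀ j k, k ≤ d j → ∑ x ∈ X j, Ring.inverse (∏ z ∈ (X j).erase x, (x - z)) * x ^ k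
      = if k = d j then 1 else 0 := by
    intro j k hk
    refine aux_one (X j) (hu j) k (d j) ?_ hk
    have := (hX j).card_pos
    have := hd j
    omega
  -- coefficients and counts
  let c : Fin m → Option (Fin n) → R := fun i o => o.elim (-b i) (A i)
  let cnt : (Fin m → Option (Fin n)) → Fin n → ℕ :=
    fun τ j => (Finset.univ.filter (fun i => τ i = some j)).card
  have hexp : ∀ x : Fin n → R, ∏ i, ((∑ j, A i j * x j) - b i)
      = ∑ τ : Fin m → Option (Fin n), (∏ i, c i (τ i)) * ∏ j, x j ^ cnt τ j := by
    intro x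
    have : ∀ i, (∑ j, A i j * x j) - b i
        = ∑ o : Option (Fin n), c i o * o.elim 1 x := by
      intro i
      rw [Fintype.sum_option]
      simp [c]
      ring
    simp_rw [this]
    rw [Finset.prod_univ_sum, Fintype.piFinset_univ]
    refine Finset.sum_congr rfl fun τ _ => ?_
    rw [Finset.prod_mul_distrib]
    congr 1
    have h2 : ∀ i, (τ i).elim 1 x = ∏ j, if τ i = some j then x j else 1 := by
      intro i
      cases h : τ i with
      | none => simp
      | some a => simp
    simp_rw [h2]
    rw [Finset.prod_comm]
    refine Finset.prod_congr rfl fun j _ => ?_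
    rw [Finset.prod_ite]
    simp [cnt]
  have hcs : ∀ τ, ∑ j, cnt τ j = (Finset.univ.filter (fun i => τ i ≠ none)).card := by
    intro τ
    simp only [cnt]
    rw [← Finset.card_biUnion]
    · congr 1
      ext i
      simp [Option.ne_none_iff_exists', -ne_eq]
    · intro a _ b _ hab
      rw [Function.onFun, Finset.disjoint_left]
      intro i hi hi'
      simp only [Finset.mem_filter, Finset.mem_univ, true_and] at hi hi'
      rw [hi] at hi'
      exact hab (Option.some.inj hi')
  have hRHS : ∑ x ∈ Fintype.piFinset X,
          Ring.inverse (∏ j, ∏ z ∈ (X j).erase (x j), (x j - z))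
          * ∏ i, ((∑ j, A i j * x j) - b i)
      = ∑ τ : Fin m → Option (Fin n), if ∀ j, cnt τ j = d j then ∏ i, c i (τ i) else 0 := by
    simp_rw [hexp, Finset.mul_sum]
    rw [Finset.sum_comm]
    refine Finset.sum_congr rfl fun τ _ => ?_
    have h3 : ∑ x ∈ Fintype.piFinset X, Ring.inverse (∏ j, ∏ z ∈ (X j).erase (x j), (x j - z))
          * ((∏ i, c i (τ i)) * ∏ j, x j ^ cnt τ j)
        = (∏ i, c i (τ i)) * ∏ j, ∑ y ∈ X j,
            Ring.inverse (∏ z ∈ (X j).erase y, (y - z)) * y ^ cnt τ j := by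
      rw [Finset.prod_univ_sum, Finset.mul_sum]
      refine Finset.sum_congr rfl fun x _ => ?_
      rw [aux_inverse_prod, Finset.prod_mul_distrib]
      ring
    rw [h3]
    split_ifs with hτ
    · refine (congrArg _ (Finset.prod_eq_one ?_)).trans (mul_one _)
      intro j _
      rw [h1 j _ (hτ j).le, if_pos (hτ j)]
    · have hlt : ∃ j, cnt τ j < d j := by
        by_contra! hcon
        apply hτ
        have hle : ∑ j, cnt τ j ≤ ∑ j, d j := by
          rw [hcs]
          refine (Finset.card_le_univ _).trans ?_
          simpa using hm
        have heq := (Finset.sum_eq_sum_iff_of_le (s := Finset.univ) (fun j _ => hcon j)).1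
          (le_antisymm (Finset.sum_le_sum fun j _ => hcon j) hle)
        intro j
        exact (heq j (Finset.mem_univ j)).symm
      obtain ⟨j, hj⟩ := hlt
      rw [Finset.prod_eq_zero (Finset.mem_univ j), mul_zero]
      rw [h1 j _ hj.le, if_neg hj.ne]
  rw [hRHS, ← Finset.sum_filter]
  refine Finset.sum_bij (fun σ _ => fun i => some (σ i)) ?_ ?_ ?_ ?_
  · intro σ hσ
    simpa [cnt] using hσ
  · intro σ _ σ' _ h
    funext i
    exact Option.some.inj (congrFun h i)
  · intro τ hτ
    simp only [Finset.mem_filter, Finset.mem_univ, true_and] at hτ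
    have hall : ∀ i, τ i ≠ none := by
      have h4 : (Finset.univ.filter (fun i => τ i ≠ none)) = Finset.univ := by
        apply Finset.eq_univ_of_card
        apply le_antisymm (Finset.card_le_univ _)
        rw [← hcs, Finset.sum_congr rfl fun j _ => hτ j]
        simpa using hm
      intro i
      have := Finset.mem_univ i
      rw [← h4] at this
      simpa using this
    choose σ hσ using fun i => Option.ne_none_iff_exists'.1 (hall i)
    refine ⟨σ, ?_, ?_⟩
    · simpa [cnt, hσ] using hτ
    · funext i
      exact (hσ i).symm
  · intro σ _
    simp [c]
end

section
/- Let R be a commutative ring, A = (a_{ij}) ∈ R^{m×n}, b = (b_i) ∈ R^m, and let X = X_1 × ⋯ × X_n be an integral d-grid (for all j, differences of distinct elements of X_j are non-zero-divisors; e.g. R an integral domain). If m ≤ d_1 + ⋯ + d_n and per_d(A) ≠ 0, where d = (d_1,…,d_n), then there exists x ∈ X such that Σ_{j=1}^n a_{ij} x_j ≠ b_i for every i = 1,…,m. -/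
open Finset

lemma exists_weights {R : Type*} [CommRing R] (S : Finset R) (d : ℕ) (hd : S.card = d + 1)
    (hint : ∀ x ∈ S, ∀ w ∈ S, x ≠ w → x - w ∈ nonZeroDivisors R) :
    ∃ (w : R → R) (D : R), D ∈ nonZeroDivisors R ∧ (∀ k < d, ∑ x ∈ S, w x * x ^ k = 0) ∧
      ∑ x ∈ S, w x * x ^ d = D := by
  classical
  let e : S ≃ Fin (d + 1) := S.equivFinOfCardEq hd
  let v : Fin (d + 1) → R := fun i => (e.symm i : R)
  let V := Matrix.vandermonde v
  have key : ∀ k : Fin (d + 1),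
      ∑ i, V.adjugate (Fin.last d) i * v i ^ (k : ℕ) = if Fin.last d = k then V.det else 0 := by
    intro k
    have h := congrFun (congrFun (Matrix.adjugate_mul V) (Fin.last d)) k
    rw [Matrix.mul_apply] at h
    simpa [V, Matrix.vandermonde_apply, Matrix.one_apply] using h
  let w : R → R := fun x => if h : x ∈ S then V.adjugate (Fin.last d) (e ⟨x, h⟩) else 0
  have hsum : ∀ k : ℕ, ∑ x ∈ S, w x * x ^ k = ∑ i, V.adjugate (Fin.last d) i * v i ^ k := by
    intro k
    rw [← Finset.sum_coe_sort, ← Equiv.sum_comp e]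
    refine Finset.sum_congr rfl fun x _ => ?_
    simp [w, v]
  refine ⟨w, V.det, ?_, ?_, ?_⟩
  · rw [Matrix.det_vandermonde]
    refine Submonoid.prod_mem _ fun i _ => Submonoid.prod_mem _ fun j hj => ?_
    refine hint _ (e.symm j).2 _ (e.symm i).2 fun h => ?_
    have := e.symm.injective (Subtype.ext h)
    simp [this] at hj
  · intro k hk
    rw [hsum]
    have := key ⟨k, by omega⟩
    rw [if_neg] at this
    · exact this
    · intro h
      have := congrArg Fin.val h
      simp at this
      omega
  · rw [hsum]
    simpa using key (Fin.last d)

/-- Permanent Lemma: over an integral grid with `m ≤ Σ d_j`, if `per_d(A) ≠ 0`, then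
there is a grid point `x` with `(Ax)_i ≠ b_i` for all `i`. -/
theorem permanent_lemma {R : Type*} [CommRing R] {m n : ℕ}
    (A : Fin m → Fin n → R) (b : Fin m → R)
    (X : Fin n → Finset R) (hX : ∀ j, (X j).Nonempty)
    (d : Fin n → ℕ) (hd : ∀ j, d j = (X j).card - 1)
    (hint : ∀ j, ∀ x ∈ X j, ∀ w ∈ X j, x ≠ w → x - w ∈ nonZeroDivisors R)
    (hm : m ≤ ∑ j, d j)
    (hper : ∑ σ ∈ (Finset.univ : Finset (Fin m → Fin n)).filter
        (fun σ => ∀ j, (Finset.univ.filter (fun i => σ i = j)).card = d j),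
        ∏ i, A i (σ i) ≠ 0) :
    ∃ x : Fin n → R, (∀ j, x j ∈ X j) ∧ ∀ i, ∑ j, A i j * x j ≠ b i := by
  classical
  by_contra! hcon
  have hw := fun j => exists_weights (X j) (d j)
    (by have := (hX j).card_pos; have := hd j; omega) (hint j)
  choose w D hD hlt heq using hw
  let c : Fin m → Option (Fin n) → R := fun i o => o.elim (-b i) (A i)
  let cnt : (Fin m → Option (Fin n)) → Fin n → ℕ := fun τ j =>
    (Finset.univ.filter (fun i => τ i = some j)).card
  have hexp : ∀ x : Fin n → R, ∏ i, (∑ j, A i j * x j - b i) =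
      ∑ τ : Fin m → Option (Fin n), (∏ i, c i (τ i)) * ∏ j, x j ^ cnt τ j := by
    intro x
    have h1 : ∀ i, ∑ j, A i j * x j - b i =
        ∑ o : Option (Fin n), c i o * o.elim 1 x := by
      intro i
      rw [Fintype.sum_option]
      simp [c]
      ring
    simp_rw [h1]
    rw [Finset.prod_univ_sum, Fintype.piFinset_univ]
    refine Finset.sum_congr rfl fun τ _ => ?_
    rw [Finset.prod_mul_distrib]
    congr 1
    have h2 : ∀ i, (τ i).elim 1 x = ∏ j, if τ i = some j then x j else 1 := by
      intro i
      cases h : τ i with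
      | none => simp
      | some a => simp
    simp_rw [h2]
    rw [Finset.prod_comm]
    refine Finset.prod_congr rfl fun j _ => ?_
    rw [Finset.prod_ite]
    simp [cnt]
  have hzero : ∑ x ∈ Fintype.piFinset X, (∏ j, w j (x j)) * ∏ i, (∑ j, A i j * x j - b i) = 0 := by
    refine Finset.sum_eq_zero fun x hx => ?_
    obtain ⟨i, hi⟩ := hcon x (Fintype.mem_piFinset.1 hx)
    rw [Finset.prod_eq_zero (Finset.mem_univ i) (by rw [hi, sub_self]), mul_zero]
  have hmain : ∑ x ∈ Fintype.piFinset X, (∏ j, w j (x j)) * ∏ i, (∑ j, A i j * x j - b i) =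
      ∑ τ : Fin m → Option (Fin n), (∏ i, c i (τ i)) *
        ∏ j, ∑ x ∈ X j, w j x * x ^ cnt τ j := by
    simp_rw [hexp, Finset.mul_sum]
    rw [Finset.sum_comm]
    refine Finset.sum_congr rfl fun τ _ => ?_
    rw [Finset.prod_univ_sum, Finset.mul_sum]
    refine Finset.sum_congr rfl fun x _ => ?_
    rw [Finset.prod_mul_distrib]
    ring
  have hfin : (∑ σ ∈ (Finset.univ : Finset (Fin m → Fin n)).filter
        (fun σ => ∀ j, (Finset.univ.filter (fun i => σ i = j)).card = d j),
        ∏ i, A i (σ i)) * ∏ j, D j = ∑ τ : Fin m → Option (Fin n), (∏ i, c i (τ i)) *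
        ∏ j, ∑ x ∈ X j, w j x * x ^ cnt τ j := by
    rw [Finset.sum_mul]
    refine Finset.sum_of_injOn (fun σ i => some (σ i)) ?_ (by simp [Set.MapsTo]) ?_ ?_
    · intro σ _ σ' _ h
      funext i
      exact Option.some.inj (congrFun h i)
    · intro τ _ hτ
      by_cases hk : ∃ j, cnt τ j < d j
      · obtain ⟨j, hj⟩ := hk
        rw [Finset.prod_eq_zero (Finset.mem_univ j) (hlt j _ hj), mul_zero]
      · exfalso
        push Not at hk
        have hcard : (Finset.univ.filter (fun i => τ i = none)).card + ∑ j, cnt τ j = m := by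
          have := Finset.card_eq_sum_card_fiberwise (s := (Finset.univ : Finset (Fin m)))
            (t := (Finset.univ : Finset (Option (Fin n)))) (f := τ) (by simp [Set.MapsTo])
          rw [Fintype.sum_option] at this
          simpa [cnt] using this.symm
        have hle : ∑ j, d j ≤ ∑ j, cnt τ j := Finset.sum_le_sum fun j _ => hk j
        have hnone : (Finset.univ.filter (fun i => τ i = none)).card = 0 := by omega
        have hs : ∑ j, d j = ∑ j, cnt τ j := by omega
        have hall := (Finset.sum_eq_sum_iff_of_le (fun j _ => hk j)).1 hs
        have hsome : ∀ i, ∃ j, some j = τ i := by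
          intro i
          cases h : τ i with
          | none =>
            rw [Finset.card_eq_zero] at hnone
            have : i ∈ (Finset.univ.filter (fun i => τ i = none)) := by simp [h]
            rw [hnone] at this
            simp at this
          | some a => exact ⟨a, rfl⟩
        choose σ hσ using hsome
        apply hτ
        refine ⟨σ, ?_, funext hσ⟩
        simp only [Finset.coe_filter, Finset.mem_univ, true_and, Set.mem_setOf_eq]
        intro j
        rw [hall j (Finset.mem_univ j)]
        simp [cnt, ← hσ]
    · intro σ hσ
      simp only [Finset.mem_filter, Finset.mem_univ, true_and] at hσ
      have : ∀ j, cnt (fun i => some (σ i)) j = d j := by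
        intro j
        rw [← hσ j]
        simp [cnt]
      simp_rw [this, heq]
      simp [c]
  rw [← hmain, hzero] at hfin
  exact hper ((mul_right_mem_nonZeroDivisors_eq_zero_iff
    (Submonoid.prod_mem _ fun j _ => hD j)).1 hfin)
end
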